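/- For every positive integer n, the length spectrum of n equals the union of the set of odd divisors k of n with k^2 < 2n and the set of numbers 2n/k where k is an odd divisor of n with k^2 > 2n. -/

import Mathlib

/-- `IsDecomp n a m` means the `m` consecutive positive integers
`a+1, a+2, …, a+m` form a decomposition of `n`. -/
def IsDecomp (n a m : ℕ) : Prop :=
  1 ≤ m ∧ (Finset.range m).sum (fun i => a + i + 1) = n

/-- The length spectrum of `n`: the set of lengths of decompositions of `n`. -/
def Lspec (n : ℕ) : Set ℕ := {m | ∃ a, IsDecomp n a m}

/-!
Since `2 * ((a + 1) + ⋯ + (a + m)) = m * (2 * a + m + 1)`, the lengths of decompositions of `n` are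
the smaller factors `m` in the factorizations `2 * n = m * l` whose factors have opposite parity.
The odd factor of such a factorization is an odd divisor `k` of `n`, and comparing `k ^ 2` with
`2 * n` tells whether `k` is the smaller factor `m` or the larger factor `l = 2 * n / m`.
-/

theorem two_mul_sum_range_add_add_one (a m : ℕ) :
    2 * ∑ i ∈ Finset.range m, (a + i + 1) = m * (2 * a + m + 1) := by
  induction m with
  | zero => simp
  | succ m ih => rw [Finset.sum_range_succ, mul_add, ih]; ring

theorem isDecomp_iff {n a m : ℕ} :
    IsDecomp n a m ↔ 0 < m ∧ m * (2 * a + m + 1) = 2 * n := by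
  rw [IsDecomp, ← two_mul_sum_range_add_add_one, Nat.mul_right_inj two_ne_zero, Nat.succ_le_iff]

theorem lt_and_odd_add_iff_exists {m l : ℕ} :
    m < l ∧ Odd (m + l) ↔ ∃ a, l = 2 * a + m + 1 := by
  constructor
  · rintro ⟨hlt, c, hc⟩
    exact ⟨c - m, by omega⟩
  · rintro ⟨a, rfl⟩
    exact ⟨by omega, a + m, by ring⟩

theorem mem_lspec_iff {n m : ℕ} :
    m ∈ Lspec n ↔ 0 < m ∧ ∃ l, m < l ∧ Odd (m + l) ∧ m * l = 2 * n := by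
  simp only [Lspec, Set.mem_ofPred_eq, isDecomp_iff]
  constructor
  · rintro ⟨a, hm, hmul⟩
    obtain ⟨hlt, hadd⟩ := lt_and_odd_add_iff_exists.mpr ⟨a, rfl⟩
    exact ⟨hm, _, hlt, hadd, hmul⟩
  · rintro ⟨hm, l, hlt, hadd, hmul⟩
    obtain ⟨a, rfl⟩ := lt_and_odd_add_iff_exists.mp ⟨hlt, hadd⟩
    exact ⟨a, hm, hmul⟩

theorem dvd_of_odd_of_mul_eq_two_mul {n k l : ℕ} (hk : Odd k) (hmul : k * l = 2 * n) : k ∣ n :=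
  hk.coprime_two_right.dvd_of_dvd_mul_left ⟨l, hmul.symm⟩

theorem lspec_inter_odd (n : ℕ) :
    Lspec n ∩ {m | Odd m} = {k | k ∣ n ∧ Odd k ∧ k ^ 2 < 2 * n} := by
  ext m
  simp only [Set.mem_inter_iff, Set.mem_ofPred_eq, mem_lspec_iff]
  constructor
  · rintro ⟨⟨hm, l, hlt, -, hmul⟩, hodd⟩
    refine ⟨dvd_of_odd_of_mul_eq_two_mul hodd hmul, hodd, ?_⟩
    rw [← hmul, sq]
    exact Nat.mul_lt_mul_of_pos_left hlt hm
  · rintro ⟨⟨c, rfl⟩, hodd, hsq⟩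
    have hmul : m * (2 * c) = 2 * (m * c) := mul_left_comm m 2 c
    rw [← hmul, sq] at hsq
    exact ⟨⟨hodd.pos, 2 * c, Nat.lt_of_mul_lt_mul_left hsq, hodd.add_even (even_two_mul c), hmul⟩,
      hodd⟩

theorem lspec_inter_even {n : ℕ} (hn : 0 < n) :
    Lspec n ∩ {m | Even m} = {m | ∃ k, k ∣ n ∧ Odd k ∧ 2 * n < k ^ 2 ∧ m = 2 * n / k} := by
  ext m
  simp only [Set.mem_inter_iff, Set.mem_ofPred_eq, mem_lspec_iff]
  constructor
  · rintro ⟨⟨-, l, hlt, hadd, hmul⟩, heven⟩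
    have hodd : Odd l := (Nat.odd_add'.mp hadd).mpr heven
    refine ⟨l, dvd_of_odd_of_mul_eq_two_mul hodd (mul_comm m l ▸ hmul), hodd, ?_,
      Nat.eq_div_of_mul_eq_left hodd.pos.ne' hmul⟩
    rw [← hmul, sq]
    exact Nat.mul_lt_mul_of_pos_right hlt hodd.pos
  · rintro ⟨k, ⟨c, rfl⟩, hodd, hsq, rfl⟩
    have hmul : 2 * c * k = 2 * (k * c) := by ring
    rw [← hmul, sq] at hsq
    rw [← hmul, Nat.mul_div_cancel _ hodd.pos]
    have hc : 0 < c := Nat.pos_of_mul_pos_left hn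
    exact ⟨⟨by positivity, k, Nat.lt_of_mul_lt_mul_right hsq, (even_two_mul c).add_odd hodd, rfl⟩,
      even_two_mul c⟩

/-- The length spectrum of a positive integer `n` equals the union of the set
of odd divisors `k` of `n` with `k² < 2n` and the set of numbers `2n/k` where
`k` is an odd divisor of `n` with `k² > 2n`. -/
theorem lspec_eq_union (n : ℕ) (hn : 0 < n) :
    Lspec n =
      {k | k ∣ n ∧ Odd k ∧ k ^ 2 < 2 * n} ∪
        {m | ∃ k, k ∣ n ∧ Odd k ∧ 2 * n < k ^ 2 ∧ m = 2 * n / k} := by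
  have odd_union_even : {m : ℕ | Odd m} ∪ {m | Even m} = Set.univ :=
    Set.eq_univ_of_forall fun m => (Nat.even_or_odd m).symm
  rw [← lspec_inter_odd, ← lspec_inter_even hn, ← Set.inter_union_distrib_left, odd_union_even,
    Set.inter_univ]
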